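/- Let Ω′ ⊆ ℝ² be open and let v : Ω′ → ℝ be a positive C² function of (y,τ) satisfying the renormalized translator equation on Ω′. Let U ⊆ {(v,τ) ∈ ℝ² : v > 0} be open and let Y : U → ℝ be C², and suppose Y is a two-sided inverse of v in the first variable: for every (y,τ) ∈ Ω′ one has (v(y,τ),τ) ∈ U and Y(v(y,τ),τ) = y, and for every (u,τ) ∈ U one has (Y(u,τ),τ) ∈ Ω′ and v(Y(u,τ),τ) = u. Then Y satisfies the inverse-profile translator equation Y_τ = Y_vv/(1 + Y_v²) + Y_v/v + (Y − v·Y_v)/2 + e^τ·M[Y] at every point of U. -/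

import Mathlib

noncomputable section

/-- Partial derivative in the first variable. -/
def pdv (f : ℝ × ℝ → ℝ) (p : ℝ × ℝ) : ℝ := deriv (fun s => f (s, p.2)) p.1

/-- Partial derivative in the second variable. -/
def pdτ (f : ℝ × ℝ → ℝ) (p : ℝ × ℝ) : ℝ := deriv (fun s => f (p.1, s)) p.2

/-- The nonlinear term `N[v]` in the renormalized translator equation. -/
def Nop (v : ℝ × ℝ → ℝ) (p : ℝ × ℝ) : ℝ :=
  (pdv v p * (pdτ v p - v p / 2) - p.1 / 2) ^ 2 * pdv (pdv v) p /
      ((1 + (pdv v p) ^ 2) *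
        (1 + (pdv v p) ^ 2 + Real.exp p.2 * (pdτ v p + p.1 / 2 * pdv v p - v p / 2) ^ 2))
    + ((1 + (pdv v p) ^ 2) * pdτ (pdτ v) p
        - 2 * (pdv v p * (pdτ v p - v p / 2) - p.1 / 2) * pdτ (pdv v) p
        + 1 / 4 * (1 + (pdv v p) ^ 2) * (p.1 * pdv v p - v p)) /
      (1 + (pdv v p) ^ 2 + Real.exp p.2 * (pdτ v p + p.1 / 2 * pdv v p - v p / 2) ^ 2)

/-- The renormalized translator equation
`v_τ = v_yy/(1+v_y²) − (y/2)v_y + v/2 − 1/v + e^τ N[v]`. -/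
def RenormEq (v : ℝ × ℝ → ℝ) (p : ℝ × ℝ) : Prop :=
  pdτ v p = pdv (pdv v) p / (1 + (pdv v p) ^ 2) - p.1 / 2 * pdv v p + v p / 2 - 1 / v p
    + Real.exp p.2 * Nop v p

/-- The nonlinear term `M[Y]` in the inverse-profile translator equation. -/
def Mop (Y : ℝ × ℝ → ℝ) (p : ℝ × ℝ) : ℝ :=
  ((Y p / 2 - pdτ Y p) * pdv Y p + p.1 / 2) ^ 2 * pdv (pdv Y) p /
      ((1 + (pdv Y p) ^ 2) *
        (1 + (pdv Y p) ^ 2 + Real.exp p.2 * (Y p / 2 - pdτ Y p - p.1 / 2 * pdv Y p) ^ 2))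
    + ((1 + (pdv Y p) ^ 2) * pdτ (pdτ Y) p
        + (p.1 + Y p * pdv Y p - 2 * pdv Y p * pdτ Y p) * pdτ (pdv Y) p
        + 1 / 4 * (1 + (pdv Y p) ^ 2) * (p.1 * pdv Y p - Y p)) /
      (1 + (pdv Y p) ^ 2 + Real.exp p.2 * (Y p / 2 - pdτ Y p - p.1 / 2 * pdv Y p) ^ 2)

/-- The inverse-profile translator equation
`Y_τ = Y_vv/(1+Y_v²) + Y_v/v + (Y − vY_v)/2 + e^τ M[Y]`. -/
def InvEq (Y : ℝ × ℝ → ℝ) (p : ℝ × ℝ) : Prop :=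
  pdτ Y p = pdv (pdv Y) p / (1 + (pdv Y p) ^ 2) + pdv Y p / p.1
    + (Y p - p.1 * pdv Y p) / 2 + Real.exp p.2 * Mop Y p

theorem hasDerivAt_fst_aux {f : ℝ × ℝ → ℝ} {p : ℝ × ℝ} (h : DifferentiableAt ℝ f p) :
    HasDerivAt (fun s => f (s, p.2)) (fderiv ℝ f p (1, 0)) p.1 := by
  have h1 : HasDerivAt (fun s : ℝ => (s, p.2)) ((1 : ℝ), (0 : ℝ)) p.1 :=
    (hasDerivAt_id p.1).prodMk (hasDerivAt_const p.1 p.2)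
  exact HasFDerivAt.comp_hasDerivAt (f := fun s : ℝ => (s, p.2)) p.1
    (show HasFDerivAt f (fderiv ℝ f p) (p.1, p.2) from h.hasFDerivAt) h1

theorem hasDerivAt_snd_aux {f : ℝ × ℝ → ℝ} {p : ℝ × ℝ} (h : DifferentiableAt ℝ f p) :
    HasDerivAt (fun s => f (p.1, s)) (fderiv ℝ f p (0, 1)) p.2 := by
  have h1 : HasDerivAt (fun s : ℝ => (p.1, s)) ((0 : ℝ), (1 : ℝ)) p.2 :=
    (hasDerivAt_const p.2 p.1).prodMk (hasDerivAt_id p.2)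
  exact HasFDerivAt.comp_hasDerivAt (f := fun s : ℝ => (p.1, s)) p.2
    (show HasFDerivAt f (fderiv ℝ f p) (p.1, p.2) from h.hasFDerivAt) h1

theorem pdv_eq_fderiv {f : ℝ × ℝ → ℝ} {p : ℝ × ℝ} (h : DifferentiableAt ℝ f p) :
    pdv f p = fderiv ℝ f p (1, 0) := (hasDerivAt_fst_aux h).deriv

theorem pdτ_eq_fderiv {f : ℝ × ℝ → ℝ} {p : ℝ × ℝ} (h : DifferentiableAt ℝ f p) :
    pdτ f p = fderiv ℝ f p (0, 1) := (hasDerivAt_snd_aux h).deriv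

theorem fderiv_apply_eq {f : ℝ × ℝ → ℝ} {p : ℝ × ℝ} (h : DifferentiableAt ℝ f p) (a b : ℝ) :
    fderiv ℝ f p (a, b) = pdv f p * a + pdτ f p * b := by
  have : ((a, b) : ℝ × ℝ) = a • ((1 : ℝ), (0 : ℝ)) + b • ((0 : ℝ), (1 : ℝ)) := by simp
  rw [this, map_add, map_smul, map_smul, pdv_eq_fderiv h, pdτ_eq_fderiv h]
  simp only [smul_eq_mul]; ring

theorem eventually_diff {f : ℝ × ℝ → ℝ} {p : ℝ × ℝ} (h : ContDiffAt ℝ 2 f p) :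
    ∀ᶠ x in nhds p, DifferentiableAt ℝ f x := by
  filter_upwards [h.eventually (by simp)] with x hx
  exact hx.differentiableAt (by simp)

theorem fderiv_diff {f : ℝ × ℝ → ℝ} {p : ℝ × ℝ} (h : ContDiffAt ℝ 2 f p) :
    DifferentiableAt ℝ (fderiv ℝ f) p :=
  (h.fderiv_right (m := 1) (by norm_num)).differentiableAt (by simp)

theorem pdv_ev {f : ℝ × ℝ → ℝ} {p : ℝ × ℝ} (h : ContDiffAt ℝ 2 f p) :
    pdv f =ᶠ[nhds p] fun x => fderiv ℝ f x (1, 0) := by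
  filter_upwards [eventually_diff h] with x hx using pdv_eq_fderiv hx

theorem pdτ_ev {f : ℝ × ℝ → ℝ} {p : ℝ × ℝ} (h : ContDiffAt ℝ 2 f p) :
    pdτ f =ᶠ[nhds p] fun x => fderiv ℝ f x (0, 1) := by
  filter_upwards [eventually_diff h] with x hx using pdτ_eq_fderiv hx

theorem pdv_diff {f : ℝ × ℝ → ℝ} {p : ℝ × ℝ} (h : ContDiffAt ℝ 2 f p) :
    DifferentiableAt ℝ (pdv f) p :=
  ((fderiv_diff h).clm_apply (differentiableAt_const _)).congr_of_eventuallyEq (pdv_ev h)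

theorem pdτ_diff {f : ℝ × ℝ → ℝ} {p : ℝ × ℝ} (h : ContDiffAt ℝ 2 f p) :
    DifferentiableAt ℝ (pdτ f) p :=
  ((fderiv_diff h).clm_apply (differentiableAt_const _)).congr_of_eventuallyEq (pdτ_ev h)

theorem pd_symm {f : ℝ × ℝ → ℝ} {p : ℝ × ℝ} (h : ContDiffAt ℝ 2 f p) :
    pdv (pdτ f) p = pdτ (pdv f) p := by
  rw [pdv_eq_fderiv (pdτ_diff h), pdτ_eq_fderiv (pdv_diff h), (pdv_ev h).fderiv_eq,
    (pdτ_ev h).fderiv_eq, fderiv_clm_apply (fderiv_diff h) (differentiableAt_const _),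
    fderiv_clm_apply (fderiv_diff h) (differentiableAt_const _)]
  have := (h.isSymmSndFDerivAt (by simp)).eq (1, 0) (0, 1)
  simpa using this

theorem pdv_congr {f g : ℝ × ℝ → ℝ} {p : ℝ × ℝ} (h : f =ᶠ[nhds p] g) : pdv f p = pdv g p := by
  have hc : Filter.Tendsto (fun s : ℝ => (s, p.2)) (nhds p.1) (nhds p) :=
    (Continuous.prodMk_left p.2).tendsto p.1
  exact Filter.EventuallyEq.deriv_eq (hc.eventually h)

theorem pdτ_congr {f g : ℝ × ℝ → ℝ} {p : ℝ × ℝ} (h : f =ᶠ[nhds p] g) : pdτ f p = pdτ g p := by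
  have hc : Filter.Tendsto (fun s : ℝ => (p.1, s)) (nhds p.2) (nhds p) :=
    (Continuous.prodMk_right p.1).tendsto p.2
  exact Filter.EventuallyEq.deriv_eq (hc.eventually h)

theorem comp_diff {G Y : ℝ × ℝ → ℝ} {p : ℝ × ℝ} (hG : DifferentiableAt ℝ G (Y p, p.2))
    (hY : DifferentiableAt ℝ Y p) : DifferentiableAt ℝ (fun x => G (Y x, x.2)) p :=
  DifferentiableAt.comp (f := fun x : ℝ × ℝ => (Y x, x.2)) p hG (hY.prodMk differentiableAt_snd)

theorem pdv_comp {G Y : ℝ × ℝ → ℝ} {p : ℝ × ℝ} (hG : DifferentiableAt ℝ G (Y p, p.2))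
    (hY : DifferentiableAt ℝ Y p) :
    pdv (fun x => G (Y x, x.2)) p = pdv G (Y p, p.2) * pdv Y p := by
  have h1 := (hasDerivAt_fst_aux hY).prodMk (hasDerivAt_const p.1 p.2)
  have h2 := HasFDerivAt.comp_hasDerivAt (f := fun s : ℝ => (Y (s, p.2), p.2)) p.1
    (show HasFDerivAt G (fderiv ℝ G (Y p, p.2)) (Y (p.1, p.2), p.2) from hG.hasFDerivAt) h1
  rw [fderiv_apply_eq hG, ← pdv_eq_fderiv hY] at h2
  refine h2.deriv.trans ?_
  ring

theorem pdτ_comp {G Y : ℝ × ℝ → ℝ} {p : ℝ × ℝ} (hG : DifferentiableAt ℝ G (Y p, p.2))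
    (hY : DifferentiableAt ℝ Y p) :
    pdτ (fun x => G (Y x, x.2)) p = pdv G (Y p, p.2) * pdτ Y p + pdτ G (Y p, p.2) := by
  have h1 := (hasDerivAt_snd_aux hY).prodMk (hasDerivAt_id p.2)
  have h2 := HasFDerivAt.comp_hasDerivAt (f := fun s : ℝ => (Y (p.1, s), s)) p.2
    (show HasFDerivAt G (fderiv ℝ G (Y p, p.2)) (Y (p.1, p.2), p.2) from hG.hasFDerivAt) h1
  rw [fderiv_apply_eq hG, ← pdτ_eq_fderiv hY] at h2
  refine h2.deriv.trans ?_
  ring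

theorem pdv_mul {f g : ℝ × ℝ → ℝ} {p : ℝ × ℝ} (hf : DifferentiableAt ℝ f p)
    (hg : DifferentiableAt ℝ g p) :
    pdv (fun x => f x * g x) p = pdv f p * g p + f p * pdv g p := by
  rw [pdv_eq_fderiv hf, pdv_eq_fderiv hg]
  exact ((hasDerivAt_fst_aux hf).mul (hasDerivAt_fst_aux hg)).deriv

theorem pdτ_mul {f g : ℝ × ℝ → ℝ} {p : ℝ × ℝ} (hf : DifferentiableAt ℝ f p)
    (hg : DifferentiableAt ℝ g p) :
    pdτ (fun x => f x * g x) p = pdτ f p * g p + f p * pdτ g p := by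
  rw [pdτ_eq_fderiv hf, pdτ_eq_fderiv hg]
  exact ((hasDerivAt_snd_aux hf).mul (hasDerivAt_snd_aux hg)).deriv

theorem pdτ_add {f g : ℝ × ℝ → ℝ} {p : ℝ × ℝ} (hf : DifferentiableAt ℝ f p)
    (hg : DifferentiableAt ℝ g p) :
    pdτ (fun x => f x + g x) p = pdτ f p + pdτ g p := by
  rw [pdτ_eq_fderiv hf, pdτ_eq_fderiv hg]
  exact ((hasDerivAt_snd_aux hf).add (hasDerivAt_snd_aux hg)).deriv

/-- The pointwise algebraic identity. -/
theorem alg_core (u y p q a b c E vy vt vyy vyt vtt : ℝ) (hu : 0 < u) (hE : 0 < E)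
    (hp : p ≠ 0) (h1 : vy = 1 / p) (h2 : vt = -q / p) (h3 : vyy = -a / p ^ 3)
    (h4 : vyt = -b / p ^ 2 + a * q / p ^ 3)
    (h5 : vtt = -c / p + 2 * q * b / p ^ 2 - a * q ^ 2 / p ^ 3)
    (h : vt = vyy / (1 + vy ^ 2) - y / 2 * vy + u / 2 - 1 / u + E *
      ((vy * (vt - u / 2) - y / 2) ^ 2 * vyy /
        ((1 + vy ^ 2) * (1 + vy ^ 2 + E * (vt + y / 2 * vy - u / 2) ^ 2))
      + ((1 + vy ^ 2) * vtt - 2 * (vy * (vt - u / 2) - y / 2) * vyt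
        + 1 / 4 * (1 + vy ^ 2) * (y * vy - u)) /
        (1 + vy ^ 2 + E * (vt + y / 2 * vy - u / 2) ^ 2))) :
    q = a / (1 + p ^ 2) + p / u + (y - u * p) / 2 + E *
      (((y / 2 - q) * p + u / 2) ^ 2 * a /
        ((1 + p ^ 2) * (1 + p ^ 2 + E * (y / 2 - q - u / 2 * p) ^ 2))
      + ((1 + p ^ 2) * c + (u + y * p - 2 * p * q) * b
        + 1 / 4 * (1 + p ^ 2) * (u * p - y)) /
        (1 + p ^ 2 + E * (y / 2 - q - u / 2 * p) ^ 2)) := by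
  have hA : 1 + p ^ 2 ≠ 0 := by positivity
  obtain ⟨D, hD⟩ : ∃ D, D = 1 + p ^ 2 + E * (y / 2 - q - u / 2 * p) ^ 2 := ⟨_, rfl⟩
  have hD0 : D ≠ 0 := by rw [hD]; positivity
  have e1 : 1 + vy ^ 2 = (1 + p ^ 2) / p ^ 2 := by rw [h1]; field_simp; ring
  have e2 : 1 + vy ^ 2 + E * (vt + y / 2 * vy - u / 2) ^ 2 = D / p ^ 2 := by
    rw [h1, h2, hD]; field_simp; ring
  rw [e2, e1] at h
  rw [← hD]
  have hN : q = -p * vt := by rw [h2]; field_simp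
  refine hN.trans ?_
  rw [h]
  subst h1 h2 h3 h4 h5
  clear h e1 e2 hN hD
  field_simp
  ring

/-- If `v` satisfies the renormalized translator equation and `Y` is a two-sided inverse of `v`
in the first variable, then `Y` satisfies the inverse-profile translator equation. -/
theorem stmt_9 (Ω' U : Set (ℝ × ℝ)) (hΩ'open : IsOpen Ω') (hUopen : IsOpen U)
    (hUsub : ∀ p ∈ U, (0 : ℝ) < p.1)
    (v Y : ℝ × ℝ → ℝ)
    (hvC2 : ∀ p ∈ Ω', ContDiffAt ℝ 2 v p) (hvpos : ∀ p ∈ Ω', 0 < v p)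
    (hvEq : ∀ p ∈ Ω', RenormEq v p)
    (hYC2 : ∀ p ∈ U, ContDiffAt ℝ 2 Y p)
    (hinv₁ : ∀ p ∈ Ω', (v p, p.2) ∈ U ∧ Y (v p, p.2) = p.1)
    (hinv₂ : ∀ p ∈ U, (Y p, p.2) ∈ Ω' ∧ v (Y p, p.2) = p.1) :
    ∀ p ∈ U, InvEq Y p := by
  intro p hp
  have hq := fun x hx => (hinv₂ x hx).1
  have hYd : ∀ x ∈ U, DifferentiableAt ℝ Y x := fun x hx =>
    (hYC2 x hx).differentiableAt (by simp)
  have hvd : ∀ x ∈ Ω', DifferentiableAt ℝ v x := fun x hx =>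
    (hvC2 x hx).differentiableAt (by simp)
  have ev0 : ∀ x ∈ U, (fun z => v (Y z, z.2)) =ᶠ[nhds x] fun z => z.1 := by
    intro x hx
    filter_upwards [hUopen.mem_nhds hx] with z hz using (hinv₂ z hz).2
  have I1 : ∀ x ∈ U, pdv v (Y x, x.2) * pdv Y x = 1 := by
    intro x hx
    rw [← pdv_comp (hvd _ (hq x hx)) (hYd x hx), pdv_congr (ev0 x hx)]
    simp [pdv]
  have I2 : ∀ x ∈ U, pdv v (Y x, x.2) * pdτ Y x + pdτ v (Y x, x.2) = 0 := by
    intro x hx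
    rw [← pdτ_comp (hvd _ (hq x hx)) (hYd x hx), pdτ_congr (ev0 x hx)]
    simp [pdτ]
  have ev1 : (fun x => pdv v (Y x, x.2) * pdv Y x) =ᶠ[nhds p] fun _ => 1 := by
    filter_upwards [hUopen.mem_nhds hp] with z hz using I1 z hz
  have ev2 : (fun x => pdv v (Y x, x.2) * pdτ Y x + pdτ v (Y x, x.2)) =ᶠ[nhds p] fun _ => 0 := by
    filter_upwards [hUopen.mem_nhds hp] with z hz using I2 z hz
  have cv := hvC2 _ (hq p hp)
  have cY := hYC2 p hp
  have dvv := comp_diff (pdv_diff cv) (hYd p hp)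
  have dvt := comp_diff (pdτ_diff cv) (hYd p hp)
  have J1 := pdv_congr ev1
  rw [pdv_mul dvv (pdv_diff cY), pdv_comp (pdv_diff cv) (hYd p hp)] at J1
  have J2 := pdτ_congr ev1
  rw [pdτ_mul dvv (pdv_diff cY), pdτ_comp (pdv_diff cv) (hYd p hp)] at J2
  have J3 := pdτ_congr ev2
  rw [pdτ_add (f := fun x => pdv v (Y x, x.2) * pdτ Y x) (dvv.mul (pdτ_diff cY)) dvt,
    pdτ_mul dvv (pdτ_diff cY),
    pdτ_comp (pdv_diff cv) (hYd p hp), pdτ_comp (pdτ_diff cv) (hYd p hp), pd_symm cv] at J3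
  have K1 := I1 p hp
  have K2 := I2 p hp
  have hE := hvEq _ (hq p hp)
  unfold RenormEq Nop at hE
  unfold InvEq Mop
  rw [(hinv₂ p hp).2] at hE
  simp only at hE
  have z1 : pdv (fun _ : ℝ × ℝ => (1 : ℝ)) p = 0 := by simp [pdv]
  have z2 : pdτ (fun _ : ℝ × ℝ => (1 : ℝ)) p = 0 := by simp [pdτ]
  have z3 : pdτ (fun _ : ℝ × ℝ => (0 : ℝ)) p = 0 := by simp [pdτ]
  rw [z1] at J1
  rw [z2] at J2
  rw [z3] at J3
  have hp0 : pdv Y p ≠ 0 := right_ne_zero_of_mul_eq_one K1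
  have h1 : pdv v (Y p, p.2) = 1 / pdv Y p := by rw [eq_div_iff hp0]; exact K1
  rw [h1] at J1 J2 J3 K2
  have h2 : pdτ v (Y p, p.2) = -pdτ Y p / pdv Y p := by linear_combination K2
  have h3 : pdv (pdv v) (Y p, p.2) = -pdv (pdv Y) p / pdv Y p ^ 3 := by
    field_simp at J1 ⊢
    linear_combination J1
  rw [h3] at J2 J3
  have h4 : pdτ (pdv v) (Y p, p.2) =
      -pdτ (pdv Y) p / pdv Y p ^ 2 + pdv (pdv Y) p * pdτ Y p / pdv Y p ^ 3 := by
    field_simp at J2 ⊢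
    linear_combination J2
  rw [h4] at J3
  have h5 : pdτ (pdτ v) (Y p, p.2) = -pdτ (pdτ Y) p / pdv Y p
      + 2 * pdτ Y p * pdτ (pdv Y) p / pdv Y p ^ 2
      - pdv (pdv Y) p * pdτ Y p ^ 2 / pdv Y p ^ 3 := by
    field_simp at J3 ⊢
    linear_combination J3
  exact alg_core p.1 (Y p) (pdv Y p) (pdτ Y p) (pdv (pdv Y) p) (pdτ (pdv Y) p) (pdτ (pdτ Y) p)
    (Real.exp p.2) _ _ _ _ _ (hUsub p hp) (Real.exp_pos _) hp0 h1 h2 h3 h4 h5 hE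

end
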